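/- A partition p of 2n is a D-partition (i.e., occurs as the Jordan type of a nilpotent element in so(2n)) if and only if every even part of p occurs with even multiplicity. -/

import Mathlib

open Matrix
/-- A D-partition: every even part occurs with even multiplicity. -/
def IsDPartition {N : ℕ} (p : N.Partition) : Prop :=
  ∀ m ∈ p.parts, Even m → Even (p.parts.count m)

/-- `X` has Jordan type `p`: for each `k ≥ 1`, the number of parts of `p` of size at least `k`
equals `rank X^(k-1) - rank X^k`. -/
def HasJordanType {N : ℕ} (X : Matrix (Fin N) (Fin N) ℂ) (p : N.Partition) : Prop :=
  ∀ k, 1 ≤ k →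
    Multiset.card (p.parts.filter (fun m => k ≤ m)) = (X ^ (k - 1)).rank - (X ^ k).rank

/-!
If `X` is skew-symmetric, so is every odd power of `X`, and a skew-symmetric matrix has even rank.
For even `m` the ranks of `X ^ (m - 1)` and `X ^ (m + 1)` are therefore even, and so is the
multiplicity `rank X ^ (m - 1) - 2 * rank X ^ m + rank X ^ (m + 1)` of the part `m`.

Conversely, direct sums reduce the construction to a single block of odd size and to a pair of
equal blocks. A Jordan block of odd size is skew-adjoint for the symmetric form
`e i, e (m - 1 - i) ↦ (-1) ^ i`, and `N ⊕ -Nᵀ` is skew-adjoint for the form that swaps the two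
summands. Both forms have symmetric involutive Gram matrices, and when `-1` is a square and `2` is
invertible such a matrix has a symmetric square root, conjugation by which turns skew-adjoint
matrices into skew-symmetric ones.
-/

section Rank

variable {K : Type*} [Field K]

lemma finrank_range_prodMap {V V' W W' : Type*} [AddCommGroup V] [Module K V]
    [AddCommGroup V'] [Module K V'] [AddCommGroup W] [Module K W] [FiniteDimensional K W]
    [AddCommGroup W'] [Module K W'] [FiniteDimensional K W'] (f : V →ₗ[K] W) (g : V' →ₗ[K] W') :
    Module.finrank K (f.prodMap g).range = Module.finrank K f.range + Module.finrank K g.range := by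
  have h_range : (f.prodMap g).range = (f.range.subtype.prodMap g.range.subtype).range := by
    simp only [LinearMap.range_prodMap, Submodule.range_subtype]
  rw [h_range, LinearMap.finrank_range_of_inj, Module.finrank_prod]
  exact Function.Injective.prodMap Subtype.val_injective Subtype.val_injective

lemma rank_fromBlocks_diagonal {m n p q : Type*} [Finite m] [Fintype n] [Finite p] [Fintype q]
    (A : Matrix m n K) (D : Matrix p q K) : (fromBlocks A 0 0 D).rank = A.rank + D.rank := by
  have h_prodMap : (fromBlocks A 0 0 D).mulVecLin =
      (LinearEquiv.sumArrowLequivProdArrow m p K K).symm.toLinearMap ∘ₗ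
        A.mulVecLin.prodMap D.mulVecLin ∘ₗ
          (LinearEquiv.sumArrowLequivProdArrow n q K K).toLinearMap := by
    ext v (i | i) <;> simp [fromBlocks_mulVec] <;> rfl
  rw [rank, h_prodMap, LinearMap.range_comp, LinearEquiv.finrank_map_eq,
    LinearMap.range_comp_of_range_eq_top _ (LinearEquiv.range _), finrank_range_prodMap]
  rfl

lemma eq_zero_of_rank_eq_zero {m n : Type*} [Finite m] [Fintype n] {A : Matrix m n K}
    (hA : A.rank = 0) : A = 0 := by
  classical
  rw [rank, Submodule.finrank_eq_zero, LinearMap.range_eq_bot] at hA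
  ext i j
  simpa using congrFun (LinearMap.congr_fun hA (Pi.single j 1)) i

end Rank

section SkewSymmetric

variable {ι : Type*} [Fintype ι]

lemma det_eq_zero_of_transpose_eq_neg [DecidableEq ι] {R : Type*} [CommRing R]
    [NoZeroDivisors R] [NeZero (2 : R)] {A : Matrix ι ι R} (hA : Aᵀ = -A)
    (hι : Odd (Fintype.card ι)) : A.det = 0 := by
  have h_neg : A.det = -A.det := by
    simpa [det_neg, hι.neg_one_pow] using congrArg det hA
  have h_two : 2 * A.det = 0 := by linear_combination h_neg
  exact (mul_eq_zero.mp h_two).resolve_left two_ne_zero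

open Module LinearMap.BilinForm in
lemma even_finrank_of_nondegenerate {K V : Type*} [Field K] [NeZero (2 : K)] [AddCommGroup V]
    [Module K V] [FiniteDimensional K V] {B : LinearMap.BilinForm K V} (hB : B.Nondegenerate)
    (h_skew : ∀ x y, B x y = -B y x) : Even (finrank K V) := by
  have h_transpose : (toMatrix (finBasis K V) B)ᵀ = -toMatrix (finBasis K V) B := by
    ext i j
    simpa [toMatrix_apply] using h_skew _ _
  by_contra h_odd
  refine (nondegenerate_iff_det_ne_zero (finBasis K V)).mp hB
    (det_eq_zero_of_transpose_eq_neg h_transpose ?_)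
  rwa [Fintype.card_fin, ← Nat.not_even_iff_odd]

open LinearMap.BilinForm in
lemma even_finrank_range {K V : Type*} [Field K] [NeZero (2 : K)] [AddCommGroup V]
    [Module K V] [FiniteDimensional K V] {B : LinearMap.BilinForm K V}
    (h_skew : ∀ x y, B x y = -B y x) : Even (Module.finrank K B.range) := by
  obtain ⟨W, hW⟩ := exists_isCompl B.ker
  have h_nondeg : (B.restrict W).Nondegenerate := by
    rw [nondegenerate_iff_ker_eq_bot, ker_restrict_eq_of_codisjoint hW.symm.codisjoint,
      ← Submodule.disjoint_iff_comap_eq_bot]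
    · exact hW.symm.disjoint
    · intro x _ y hy
      rw [h_skew, LinearMap.mem_ker.mp hy, LinearMap.zero_apply, neg_zero]
  have h_finrank : Module.finrank K B.range = Module.finrank K W := by
    have h₁ := LinearMap.finrank_range_add_finrank_ker B
    have h₂ := Submodule.finrank_add_eq_of_isCompl hW
    omega
  rw [h_finrank]
  exact even_finrank_of_nondegenerate h_nondeg fun x y => h_skew x y

lemma even_rank_of_transpose_eq_neg {K : Type*} [Field K] [NeZero (2 : K)] {A : Matrix ι ι K}
    (hA : Aᵀ = -A) : Even A.rank := by
  classical
  have h_skew (x y : ι → K) : toBilin' A x y = -toBilin' A y x := by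
    rw [toBilin'_apply', toBilin'_apply', dotProduct_mulVec, ← mulVec_transpose, hA, neg_mulVec,
      neg_dotProduct, dotProduct_comm]
  have h_ker : (toBilin' A).ker = A.mulVecLin.ker := by
    ext x
    simp only [LinearMap.mem_ker, LinearMap.ext_iff, h_skew x, toBilin'_apply', mulVecLin_apply,
      LinearMap.zero_apply, neg_eq_zero, dotProduct_comm _ (A *ᵥ x), dotProduct_eq_zero_iff]
  have h_rank : A.rank = Module.finrank K (toBilin' A).range := by
    have h₁ := LinearMap.finrank_range_add_finrank_ker (toBilin' A)
    have h₂ := LinearMap.finrank_range_add_finrank_ker A.mulVecLin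
    rw [h_ker] at h₁
    rw [rank]
    omega
  rw [h_rank]
  exact even_finrank_range h_skew

end SkewSymmetric

section Adjoint

variable {ι : Type*} [Fintype ι] [DecidableEq ι]

lemma exists_transpose_mul_self_eq {K : Type*} [Field K] [NeZero (2 : K)] (hK : IsSquare (-1 : K))
    {J : Matrix ι ι K} (hJ : Jᵀ = J) (hJJ : J * J = 1) :
    ∃ P : (Matrix ι ι K)ˣ, (P : Matrix ι ι K)ᵀ * P = J := by
  obtain ⟨i, hi⟩ := hK
  let P : Matrix ι ι K := ((1 + i) / 2) • 1 + ((1 - i) / 2) • J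
  have hPP : P * P = J := by
    have h_one : (1 + i) / 2 * ((1 + i) / 2) + (1 - i) / 2 * ((1 - i) / 2) = 0 := by
      field_simp
      linear_combination -2 * hi
    have h_J : (1 + i) / 2 * ((1 - i) / 2) + (1 - i) / 2 * ((1 + i) / 2) = 1 := by
      field_simp
      linear_combination 2 * hi
    calc P * P
        = ((1 + i) / 2 * ((1 + i) / 2) + (1 - i) / 2 * ((1 - i) / 2)) • 1 +
          ((1 + i) / 2 * ((1 - i) / 2) + (1 - i) / 2 * ((1 + i) / 2)) • J := by
          simp only [P, Matrix.add_mul, Matrix.mul_add, smul_mul_smul_comm, Matrix.mul_one,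
            Matrix.one_mul, hJJ]
          module
      _ = J := by rw [h_one, h_J, zero_smul, one_smul, zero_add]
  refine ⟨⟨P, P * J, ?_, ?_⟩, ?_⟩
  · rw [← Matrix.mul_assoc, hPP, hJJ]
  · rw [← hPP, ← Matrix.mul_assoc, hPP, Matrix.mul_assoc, hPP, hJJ]
  · have hP : Pᵀ = P := by simp [P, hJ]
    simpa [hP] using hPP

lemma transpose_conj_eq_neg_of_isSkewAdjoint {R : Type*} [CommRing R] {J N : Matrix ι ι R}
    (P : (Matrix ι ι R)ˣ) (hP : (P : Matrix ι ι R)ᵀ * P = J) (hN : J.IsSkewAdjoint N) :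
    (P * N * P⁻¹ : Matrix ι ι R)ᵀ = -(P * N * P⁻¹) := by
  have h := (isAdjointPair_equiv 1 N (-N) P.1 P.isUnit).mp (by rwa [Matrix.mul_one, hP])
  simpa [Matrix.IsAdjointPair] using h

end Adjoint

section JordanBlocks

variable {R : Type*}

/-- The nilpotent Jordan block of size `m`, sending the basis vector `e j` to `e (j + 1)`. -/
def nilpotentBlock (R : Type*) [Zero R] [One R] (m : ℕ) : Matrix (Fin m) (Fin m) R :=
  of fun i j => if (i : ℕ) = j + 1 then 1 else 0

lemma nilpotentBlock_apply [Zero R] [One R] {m : ℕ} (i j : Fin m) :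
    nilpotentBlock R m i j = if (i : ℕ) = j + 1 then 1 else 0 := rfl

lemma nilpotentBlock_pow_apply [Semiring R] {m : ℕ} (k : ℕ) (i j : Fin m) :
    (nilpotentBlock R m ^ k) i j = if (i : ℕ) = j + k then 1 else 0 := by
  induction k generalizing j with
  | zero => simp [one_apply, Fin.ext_iff]
  | succ k ih =>
    simp only [pow_succ, mul_apply, ih, nilpotentBlock_apply, mul_ite, mul_one, mul_zero]
    by_cases hj : (j : ℕ) + 1 < m
    · rw [Finset.sum_eq_single ⟨j + 1, hj⟩ (by grind) (by simp)]
      grind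
    · grind [Finset.sum_eq_zero]

lemma rank_nilpotentBlock_pow (K : Type*) [Field K] (m k : ℕ) :
    (nilpotentBlock K m ^ k).rank = m - k := by
  classical
  let D : Matrix (Fin m) (Fin m) K := diagonal fun j => if (j : ℕ) + k < m then 1 else 0
  have h_isometry : (nilpotentBlock K m ^ k)ᵀ * nilpotentBlock K m ^ k = D := by
    ext i j
    simp only [D, mul_apply, transpose_apply, nilpotentBlock_pow_apply, diagonal_apply, ite_mul,
      one_mul, zero_mul]
    by_cases hi : (i : ℕ) + k < m
    · rw [Finset.sum_eq_single ⟨i + k, hi⟩ (by grind) (by simp)]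
      grind
    · grind [Finset.sum_eq_zero]
  have h_support : nilpotentBlock K m ^ k * D = nilpotentBlock K m ^ k := by
    ext i j
    simp only [D, mul_diagonal, nilpotentBlock_pow_apply]
    grind
  have h_rank : (nilpotentBlock K m ^ k).rank = D.rank := by
    apply le_antisymm
    · rw [← h_support]
      exact rank_mul_le_right _ _
    · rw [← h_isometry]
      exact rank_mul_le_right _ _
  rw [h_rank, rank_diagonal, ← Fintype.card_fin (m - k)]
  refine Fintype.card_congr ⟨fun i => ⟨i.1, by grind⟩, fun i => ⟨⟨i, by grind⟩, by grind⟩, ?_, ?_⟩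
  · exact fun _ => rfl
  · exact fun _ => rfl

/-- The Gram matrix of the form pairing `e i` with `e (m - 1 - i)` to `(-1) ^ i`. -/
def altAntidiagonal (R : Type*) [Ring R] (m : ℕ) : Matrix (Fin m) (Fin m) R :=
  of fun i j => if i = j.rev then (-1) ^ (i : ℕ) else 0

lemma altAntidiagonal_apply [Ring R] {m : ℕ} (i j : Fin m) :
    altAntidiagonal R m i j = if i = j.rev then (-1) ^ (i : ℕ) else 0 := rfl

lemma altAntidiagonal_mul_apply [Ring R] {m : ℕ} (A : Matrix (Fin m) (Fin m) R) (i j : Fin m) :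
    (altAntidiagonal R m * A) i j = (-1) ^ (i : ℕ) * A i.rev j := by
  simp [mul_apply, altAntidiagonal_apply, ← Fin.rev_eq_iff]

lemma mul_altAntidiagonal_apply [Ring R] {m : ℕ} (A : Matrix (Fin m) (Fin m) R) (i j : Fin m) :
    (A * altAntidiagonal R m) i j = A i j.rev * (-1) ^ (j.rev : ℕ) := by
  simp [mul_apply, altAntidiagonal_apply]

lemma neg_one_pow_rev [Ring R] {m : ℕ} (hm : Odd m) (i : Fin m) :
    (-1 : R) ^ (i.rev : ℕ) = (-1) ^ (i : ℕ) := by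
  obtain ⟨l, rfl⟩ := hm
  rw [neg_one_pow_eq_pow_mod_two, neg_one_pow_eq_pow_mod_two (i : ℕ)]
  congr 1
  grind

lemma transpose_altAntidiagonal [Ring R] {m : ℕ} (hm : Odd m) :
    (altAntidiagonal R m)ᵀ = altAntidiagonal R m := by
  ext i j
  rw [transpose_apply, altAntidiagonal_apply, altAntidiagonal_apply]
  split_ifs <;> grind [neg_one_pow_rev]

lemma altAntidiagonal_mul_self [Ring R] {m : ℕ} (hm : Odd m) :
    altAntidiagonal R m * altAntidiagonal R m = 1 := by
  ext i j
  rw [altAntidiagonal_mul_apply, altAntidiagonal_apply, neg_one_pow_rev hm, one_apply, mul_ite,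
    mul_zero, ← pow_add, Even.neg_one_pow ⟨_, rfl⟩]
  simp

lemma altAntidiagonal_isSkewAdjoint_nilpotentBlock [CommRing R] (m : ℕ) :
    (altAntidiagonal R m).IsSkewAdjoint (nilpotentBlock R m) := by
  change (nilpotentBlock R m)ᵀ * altAntidiagonal R m = altAntidiagonal R m * -nilpotentBlock R m
  ext i j
  rw [mul_altAntidiagonal_apply, altAntidiagonal_mul_apply]
  simp only [transpose_apply, Matrix.neg_apply, nilpotentBlock_apply]
  by_cases h : (i : ℕ) + j + 2 = m
  · have h_rev : (j.rev : ℕ) = i + 1 := by grind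
    have h_rev' : (i.rev : ℕ) = j + 1 := by grind
    rw [h_rev, h_rev', if_pos rfl, if_pos rfl, pow_succ, one_mul]
  · rw [if_neg (by grind), if_neg (by grind), zero_mul, neg_zero, mul_zero]

lemma swap_isSkewAdjoint_fromBlocks [CommRing R] {ι : Type*} [Fintype ι] [DecidableEq ι]
    (N : Matrix ι ι R) :
    (fromBlocks 0 1 1 0 : Matrix (ι ⊕ ι) (ι ⊕ ι) R).IsSkewAdjoint (fromBlocks N 0 0 (-Nᵀ)) := by
  simp [Matrix.IsSkewAdjoint, Matrix.IsAdjointPair, fromBlocks_multiply, fromBlocks_transpose,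
    fromBlocks_neg]

end JordanBlocks

section JordanType

variable {K ι κ : Type*} [Field K] [Fintype ι] [DecidableEq ι] [Fintype κ] [DecidableEq κ]

/-- `X` is nilpotent and `s` is the multiset of sizes of its Jordan blocks. Such an `X` is
characterised, up to similarity, by the ranks of its powers: a nilpotent block of size `m`
contributes `m - k` (truncated subtraction) to the rank of `X ^ k`. -/
def HasJordanBlocks (X : Matrix ι ι K) (s : Multiset ℕ) : Prop :=
  ∀ k, (X ^ k).rank = (s.map fun m => m - k).sum

variable {X : Matrix ι ι K} {Y : Matrix κ κ K} {s t : Multiset ℕ}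

lemma hasJordanBlocks_nilpotentBlock (K : Type*) [Field K] (m : ℕ) :
    HasJordanBlocks (nilpotentBlock K m) {m} := fun k => by
  rw [rank_nilpotentBlock_pow, Multiset.map_singleton, Multiset.sum_singleton]

namespace HasJordanBlocks

lemma fromBlocks (hX : HasJordanBlocks X s) (hY : HasJordanBlocks Y t) :
    HasJordanBlocks (fromBlocks X 0 0 Y) (s + t) := fun k => by
  rw [fromBlocks_diagonal_pow, rank_fromBlocks_diagonal, hX k, hY k, Multiset.map_add,
    Multiset.sum_add]

lemma transpose (hX : HasJordanBlocks X s) : HasJordanBlocks Xᵀ s := fun k => by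
  rw [← transpose_pow, rank_transpose, hX k]

lemma neg (hX : HasJordanBlocks X s) : HasJordanBlocks (-X) s := fun k => by
  rw [neg_pow, rank_mul_eq_right_of_isUnit_det, hX k]
  exact (isUnit_iff_isUnit_det _).mp (isUnit_one.neg.pow k)

lemma conj (hX : HasJordanBlocks X s) (P : (Matrix ι ι K)ˣ) :
    HasJordanBlocks (P * X * P⁻¹ : Matrix ι ι K) s := fun k => by
  rw [Units.conj_pow,
    rank_mul_eq_left_of_isUnit_det _ _ ((isUnit_iff_isUnit_det _).mp P⁻¹.isUnit),
    rank_mul_eq_right_of_isUnit_det _ _ ((isUnit_iff_isUnit_det _).mp P.isUnit), hX k]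

lemma reindex (hX : HasJordanBlocks X s) (e : ι ≃ κ) :
    HasJordanBlocks (X.reindex e e) s := fun k => by
  rw [← coe_reindexAlgEquiv K, ← map_pow, coe_reindexAlgEquiv, rank_reindex, hX k]

lemma card_eq_sum (hX : HasJordanBlocks X s) : Fintype.card ι = s.sum := by
  simpa using hX 0

lemma isNilpotent (hX : HasJordanBlocks X s) : IsNilpotent X := by
  refine ⟨s.sum, eq_zero_of_rank_eq_zero ?_⟩
  rw [hX, Multiset.sum_eq_zero_iff, Multiset.forall_mem_map_iff]
  exact fun m hm => Nat.sub_eq_zero_of_le (Multiset.le_sum_of_mem hm)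

end HasJordanBlocks

lemma card_filter_le_add_sum_map_sub (s : Multiset ℕ) (k : ℕ) :
    Multiset.card (s.filter fun m => k + 1 ≤ m) + (s.map fun m => m - (k + 1)).sum =
      (s.map fun m => m - k).sum := by
  induction s using Multiset.induction_on with
  | empty => simp
  | cons a s ih =>
    rw [← Multiset.countP_eq_card_filter] at ih ⊢
    rw [Multiset.countP_cons, Multiset.map_cons, Multiset.sum_cons, Multiset.map_cons,
      Multiset.sum_cons, ← ih]
    split_ifs <;> omega

lemma count_add_card_filter_succ_le (s : Multiset ℕ) (m : ℕ) :
    s.count m + Multiset.card (s.filter fun a => m + 1 ≤ a) =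
      Multiset.card (s.filter fun a => m ≤ a) := by
  induction s using Multiset.induction_on with
  | empty => simp
  | cons a s ih =>
    simp only [← Multiset.countP_eq_card_filter] at ih ⊢
    rw [Multiset.count_cons, Multiset.countP_cons, Multiset.countP_cons, ← ih]
    split_ifs <;> omega

lemma HasJordanBlocks.card_filter_le (hX : HasJordanBlocks X s) {k : ℕ} (hk : 1 ≤ k) :
    Multiset.card (s.filter fun m => k ≤ m) = (X ^ (k - 1)).rank - (X ^ k).rank := by
  obtain ⟨k, rfl⟩ := Nat.exists_eq_add_of_le' hk
  rw [hX, hX, Nat.add_sub_cancel, ← card_filter_le_add_sum_map_sub s k, Nat.add_sub_cancel]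

lemma even_count_of_transpose_eq_neg [NeZero (2 : K)] (hX : Xᵀ = -X)
    (hs : ∀ k, 1 ≤ k →
      Multiset.card (s.filter fun m => k ≤ m) = (X ^ (k - 1)).rank - (X ^ k).rank)
    {m : ℕ} (hm : Even m) (hm₀ : m ≠ 0) : Even (s.count m) := by
  obtain ⟨l, rfl⟩ := Nat.exists_eq_succ_of_ne_zero hm₀
  have h_even {k : ℕ} (hk : Odd k) : Even (X ^ k).rank :=
    even_rank_of_transpose_eq_neg (by rw [transpose_pow, hX, hk.neg_pow])
  have h_anti (k : ℕ) : (X ^ (k + 1)).rank ≤ (X ^ k).rank := by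
    rw [pow_succ]
    exact rank_mul_le_left _ _
  have h_card (k : ℕ) : Multiset.card (s.filter fun m => k + 1 ≤ m) =
      (X ^ k).rank - (X ^ (k + 1)).rank := hs (k + 1) k.succ_pos
  have h_count : s.count (l + 1) + 2 * (X ^ (l + 1)).rank =
      (X ^ l).rank + (X ^ (l + 1 + 1)).rank := by
    have h_succ := count_add_card_filter_succ_le s (l + 1)
    rw [h_card, h_card] at h_succ
    have h_le := h_anti l
    have h_le' := h_anti (l + 1)
    omega
  have h_low : Even (X ^ l).rank := h_even (by grind)
  have h_high : Even (X ^ (l + 1 + 1)).rank := h_even (by grind)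
  grind

end JordanType

section Construction

variable {K : Type*} [Field K]

/-- The additive monoid of multisets of Jordan block sizes of nilpotent skew-symmetric matrices
over `K`; addition corresponds to the direct sum of matrices. -/
def skewJordanTypes (K : Type*) [Field K] : AddSubmonoid (Multiset ℕ) where
  carrier := {s | ∃ (ι : Type) (_ : Fintype ι) (_ : DecidableEq ι) (X : Matrix ι ι K),
    Xᵀ = -X ∧ HasJordanBlocks X s}
  zero_mem' := ⟨Fin 0, inferInstance, inferInstance, 0, Subsingleton.elim _ _, fun k => by
    simpa using rank_le_width (0 ^ k : Matrix (Fin 0) (Fin 0) K)⟩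
  add_mem' := by
    rintro s t ⟨ι, _, _, X, hX, hXs⟩ ⟨κ, _, _, Y, hY, hYt⟩
    exact ⟨ι ⊕ κ, inferInstance, inferInstance, fromBlocks X 0 0 Y,
      by simp [fromBlocks_transpose, fromBlocks_neg, hX, hY], hXs.fromBlocks hYt⟩

variable [NeZero (2 : K)] {ι : Type} [Fintype ι] [DecidableEq ι] {N : Matrix ι ι K}
  {s : Multiset ℕ}

lemma HasJordanBlocks.mem_skewJordanTypes (hN : HasJordanBlocks N s) (hK : IsSquare (-1 : K))
    {J : Matrix ι ι K} (hJ : Jᵀ = J) (hJJ : J * J = 1) (hJN : J.IsSkewAdjoint N) :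
    s ∈ skewJordanTypes K := by
  obtain ⟨P, hP⟩ := exists_transpose_mul_self_eq hK hJ hJJ
  exact ⟨ι, inferInstance, inferInstance, P * N * P⁻¹,
    transpose_conj_eq_neg_of_isSkewAdjoint P hP hJN, hN.conj P⟩

lemma HasJordanBlocks.add_self_mem_skewJordanTypes (hN : HasJordanBlocks N s)
    (hK : IsSquare (-1 : K)) : s + s ∈ skewJordanTypes K :=
  (hN.fromBlocks hN.transpose.neg).mem_skewJordanTypes hK (by simp [fromBlocks_transpose])
    (by simp [fromBlocks_multiply]) (swap_isSkewAdjoint_fromBlocks N)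

lemma singleton_mem_skewJordanTypes (hK : IsSquare (-1 : K)) {m : ℕ} (hm : Odd m) :
    {m} ∈ skewJordanTypes K :=
  (hasJordanBlocks_nilpotentBlock K m).mem_skewJordanTypes hK (transpose_altAntidiagonal hm)
    (altAntidiagonal_mul_self hm) (altAntidiagonal_isSkewAdjoint_nilpotentBlock m)

lemma mem_skewJordanTypes_of_even_count (hK : IsSquare (-1 : K))
    (hs : ∀ m ∈ s, Even m → Even (s.count m)) : s ∈ skewJordanTypes K := by
  rw [← s.toFinset_sum_count_nsmul_eq]
  refine sum_mem fun m hm => ?_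
  obtain h_even | h_odd := m.even_or_odd
  · obtain ⟨r, hr⟩ := hs m (Multiset.mem_toFinset.mp hm) h_even
    rw [hr, add_nsmul, ← nsmul_add]
    exact nsmul_mem ((hasJordanBlocks_nilpotentBlock K m).add_self_mem_skewJordanTypes hK) r
  · exact nsmul_mem (singleton_mem_skewJordanTypes hK h_odd) _

end Construction

theorem jordan_type_so_iff_D_partition_general {K : Type*} [Field K] [NeZero (2 : K)]
    (hK : IsSquare (-1 : K)) {N : ℕ} (p : N.Partition) :
    (∃ X : Matrix (Fin N) (Fin N) K, Xᵀ = -X ∧ IsNilpotent X ∧ ∀ k, 1 ≤ k →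
        Multiset.card (p.parts.filter fun m => k ≤ m) = (X ^ (k - 1)).rank - (X ^ k).rank) ↔
      IsDPartition p := by
  constructor
  · rintro ⟨X, hX, -, hXp⟩ m hm h_even
    exact even_count_of_transpose_eq_neg hX hXp h_even (p.parts_pos hm).ne'
  · intro hp
    obtain ⟨ι, _, _, X, hX, hXp⟩ := mem_skewJordanTypes_of_even_count hK hp
    let e := Fintype.equivFinOfCardEq (hXp.card_eq_sum.trans p.parts_sum)
    refine ⟨X.reindex e e, ?_, (hXp.reindex e).isNilpotent,
      fun k hk => (hXp.reindex e).card_filter_le hk⟩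
    rw [transpose_reindex, hX]
    rfl

/-- A partition `p` of `2n` is a D-partition (i.e. occurs as the Jordan type of a
nilpotent element of `so(2n, ℂ)`, the skew-symmetric matrices) if and only if every even part
of `p` occurs with even multiplicity. -/
theorem jordan_type_so_iff_D_partition (n : ℕ) (p : (2 * n).Partition) :
    (∃ X : Matrix (Fin (2 * n)) (Fin (2 * n)) ℂ,
        Xᵀ = -X ∧ IsNilpotent X ∧ HasJordanType X p) ↔ IsDPartition p :=
  jordan_type_so_iff_D_partition_general (Complex.isSquare (-1)) p
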